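/- In R′, the sum of the diagonal commutators satisfies ∑_{k=2}^{n} [x_k, x_{k−1}] = ∑_{p=1}^{n−2} ∑_{j=2}^{n−p} j·[x_p, x_{j+p}], where the factor j in front of the bracket is the integer j. -/

import Mathlib

open Finset

/-- The `k`-th elementary polynomial `σ_k` in the noncommuting variables
`x_1, …, x_n` of the free algebra `K⟨x_1,…,x_n⟩`. -/
noncomputable def elemPoly (K : Type*) [Field K] (n k : ℕ) : FreeAlgebra K (Fin n) :=
  ∑ s ∈ Finset.univ.powersetCard k, ((s.sort (· ≤ ·)).map (FreeAlgebra.ι K)).prod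

/-- The relation on the free algebra identifying `x_i * σ_k` with `σ_k * x_i`
for `1 ≤ i, k ≤ n`; the quotient `R′ = P/I` by the two-sided ideal `I` generated
by the commutators `[x_i, σ_k]` is `RingQuot` of this relation. -/
noncomputable def commRel (K : Type*) [Field K] (n : ℕ) :
    FreeAlgebra K (Fin n) → FreeAlgebra K (Fin n) → Prop :=
  fun a b => ∃ (i : Fin n) (k : ℕ), 1 ≤ k ∧ k ≤ n ∧
    a = FreeAlgebra.ι K i * elemPoly K n k ∧ b = elemPoly K n k * FreeAlgebra.ι K i

/-- The quotient ring `R′ = P/I`. -/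
noncomputable abbrev Rquot (K : Type*) [Field K] (n : ℕ) := RingQuot (commRel K n)

/-- The quotient map `P → R′`. -/
noncomputable def mkR (K : Type*) [Field K] (n : ℕ) :
    FreeAlgebra K (Fin n) →ₐ[K] Rquot K n :=
  RingQuot.mkAlgHom K (commRel K n)

/-- The image in `R′` of the generator `x_i`. -/
noncomputable def XR (K : Type*) [Field K] (n : ℕ) (i : Fin n) : Rquot K n :=
  mkR K n (FreeAlgebra.ι K i)

/-- One-based labelling of the images in `R′` of the generators: `Xone K n m` is
the image of `x_m` for `1 ≤ m ≤ n` (with a junk value `0` for `m > n`). -/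
noncomputable def Xone (K : Type*) [Field K] (n : ℕ) (m : ℕ) : Rquot K n :=
  if h : m - 1 < n then XR K n ⟨m - 1, h⟩ else 0

/-!
Set `c p q = ⁅x p, x q⁆` and suppose every row sum `∑ q, c p q` vanishes. Weighting row `p` by `p`
and adding up, antisymmetry pairs the entries `(p, q)` and `(q, p)` into
`∑_{p < q} (p - q) • c p q = 0`. Grouping this sum by the difference `j = q - p` and moving the
terms with `j = 1` to the other side gives the identity. In `R′` the row sums vanish because
`σ_1 = x_1 + ⋯ + x_n` commutes with every `x_p`.
-/

section FiniteSums

variable {M : Type*} [AddCommMonoid M]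

theorem sum_Icc_one_filter_lt (f : ℕ → M) (n p : ℕ) :
    ∑ q ∈ Icc 1 n with p < q, f q = ∑ j ∈ Icc 1 (n - p), f (j + p) := by
  refine (sum_nbij' (· + p) (· - p) ?_ ?_ ?_ ?_ fun _ _ ↦ rfl).symm <;>
    simp only [mem_filter, mem_Icc] <;> omega

theorem sum_Icc_two_eq_sum_Icc_one_add_one (f : ℕ → M) (n : ℕ) :
    ∑ k ∈ Icc 2 n, f k = ∑ p ∈ Icc 1 (n - 1), f (p + 1) := by
  refine sum_nbij' (· - 1) (· + 1) ?_ ?_ ?_ ?_ fun k hk ↦ ?_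
  case refine_5 => rw [Nat.sub_add_cancel (by grind)]
  all_goals simp only [mem_Icc]; omega

theorem sum_sum_Icc_sub_eq_of_le (f : ℕ → ℕ → M) {a b m n : ℕ} (hm : 1 ≤ m)
    (hb : n - m ≤ b) :
    ∑ p ∈ Icc a b, ∑ j ∈ Icc m (n - p), f p j =
      ∑ p ∈ Icc a (n - m), ∑ j ∈ Icc m (n - p), f p j :=
  (sum_subset (Icc_subset_Icc_right hb) fun p _ hp ↦ by
    rw [Icc_eq_empty (by grind), sum_empty]).symm

theorem sum_sum_Icc_one_sub (f : ℕ → ℕ → M) (n : ℕ) :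
    ∑ p ∈ Icc 1 n, ∑ j ∈ Icc 1 (n - p), f p j =
      ∑ p ∈ Icc 1 (n - 1), f p 1 + ∑ p ∈ Icc 1 (n - 2), ∑ j ∈ Icc 2 (n - p), f p j := by
  have split_first : ∀ p ∈ Icc 1 (n - 1),
      ∑ j ∈ Icc 1 (n - p), f p j = f p 1 + ∑ j ∈ Icc 2 (n - p), f p j := fun p hp ↦
    (add_sum_Ioc_eq_sum_Icc (by grind)).symm
  rw [sum_sum_Icc_sub_eq_of_le f le_rfl (Nat.sub_le n 1), sum_congr rfl split_first,
    sum_add_distrib, sum_sum_Icc_sub_eq_of_le f one_le_two (by lia)]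

end FiniteSums

theorem sum_smul_sum_eq_sum_lt_sub_smul {ι R M : Type*} [LinearOrder ι] [Ring R]
    [AddCommGroup M] [Module R M] (s : Finset ι) (w : ι → R) {f : ι → ι → M}
    (hdiag : ∀ i, f i i = 0) (hskew : ∀ i j, f j i = -f i j) :
    ∑ i ∈ s, w i • ∑ j ∈ s, f i j = ∑ i ∈ s, ∑ j ∈ s with i < j, (w i - w j) • f i j := by
  have trichotomy (i j : ι) : w i • f i j =
      (if i < j then w i • f i j else 0) + (if j < i then w i • f i j else 0) := by
    rcases lt_trichotomy i j with h | rfl | h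
    · simp [h, h.not_gt]
    · simp [hdiag]
    · simp [h, h.not_gt]
  calc ∑ i ∈ s, w i • ∑ j ∈ s, f i j
      = ∑ i ∈ s, ∑ j ∈ s, (if i < j then w i • f i j else 0) +
          ∑ i ∈ s, ∑ j ∈ s, (if j < i then w i • f i j else 0) := by
        simp_rw [smul_sum, ← sum_add_distrib]
        exact sum_congr rfl fun i _ ↦ sum_congr rfl fun j _ ↦ trichotomy i j
    _ = ∑ i ∈ s, ∑ j ∈ s, (if i < j then w i • f i j else 0) +
          ∑ i ∈ s, ∑ j ∈ s, (if i < j then w j • f j i else 0) := by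
        rw [sum_comm (f := fun i j ↦ if j < i then w i • f i j else 0)]
    _ = ∑ i ∈ s, ∑ j ∈ s with i < j, (w i - w j) • f i j := by
        simp_rw [← sum_filter, ← sum_add_distrib]
        exact sum_congr rfl fun i _ ↦ sum_congr rfl fun j _ ↦ by
          rw [hskew i j, smul_neg, ← sub_eq_add_neg, ← sub_smul]

section LieRing

variable {L : Type*} [LieRing L]

theorem sum_sum_smul_lie_add_eq_zero {x : ℕ → L} {n : ℕ}
    (h : ∀ p ∈ Icc 1 n, ⁅x p, ∑ q ∈ Icc 1 n, x q⁆ = 0) :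
    ∑ p ∈ Icc 1 n, ∑ j ∈ Icc 1 (n - p), j • ⁅x p, x (j + p)⁆ = 0 := by
  have rows : ∑ p ∈ Icc 1 n, (p : ℤ) • ∑ q ∈ Icc 1 n, ⁅x p, x q⁆ = 0 :=
    sum_eq_zero fun p hp ↦ by rw [← lie_sum, h p hp, smul_zero]
  rw [sum_smul_sum_eq_sum_lt_sub_smul _ _ (fun p ↦ lie_self (x p))
    fun p q ↦ (lie_skew (x q) (x p)).symm] at rows
  simpa only [sum_Icc_one_filter_lt, Nat.cast_add, sub_add_cancel_right, neg_smul, natCast_zsmul,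
    sum_neg_distrib, neg_eq_zero] using rows

theorem sum_diagonal_commutators_general (x : ℕ → L) (n : ℕ)
    (h : ∀ p ∈ Icc 1 n, ⁅x p, ∑ q ∈ Icc 1 n, x q⁆ = 0) :
    ∑ k ∈ Icc 2 n, ⁅x k, x (k - 1)⁆ =
      ∑ p ∈ Icc 1 (n - 2), ∑ j ∈ Icc 2 (n - p), j • ⁅x p, x (j + p)⁆ := by
  calc ∑ k ∈ Icc 2 n, ⁅x k, x (k - 1)⁆
      = -∑ p ∈ Icc 1 (n - 1), 1 • ⁅x p, x (1 + p)⁆ := by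
        simp only [sum_Icc_two_eq_sum_Icc_one_add_one, Nat.add_sub_cancel, one_smul,
          ← sum_neg_distrib, lie_skew, Nat.add_comm]
    _ = ∑ p ∈ Icc 1 (n - 2), ∑ j ∈ Icc 2 (n - p), j • ⁅x p, x (j + p)⁆ :=
        neg_eq_of_add_eq_zero_right <|
          (sum_sum_Icc_one_sub _ n).symm.trans (sum_sum_smul_lie_add_eq_zero h)

end LieRing

section Rquot

variable (K : Type*) [Field K] (n : ℕ)

theorem elemPoly_one : elemPoly K n 1 = ∑ i, FreeAlgebra.ι K i := by
  simp [elemPoly, powersetCard_one]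

theorem Xone_val_add_one (i : Fin n) : Xone K n (i + 1) = XR K n i := by
  simp [Xone]

theorem mkR_elemPoly_one : mkR K n (elemPoly K n 1) = ∑ q ∈ Icc 1 n, Xone K n q :=
  calc mkR K n (elemPoly K n 1)
      = ∑ i : Fin n, Xone K n (i + 1) := by
        simp_rw [elemPoly_one, map_sum, Xone_val_add_one, XR]
    _ = ∑ i ∈ range n, Xone K n (i + 1) := Fin.sum_univ_eq_sum_range (fun i ↦ Xone K n (i + 1)) n
    _ = ∑ q ∈ Icc 1 n, Xone K n q := by
        rw [range_eq_Ico, sum_Ico_add', zero_add, Ico_add_one_right_eq_Icc]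

variable {K n}

theorem commute_XR_mkR_elemPoly (i : Fin n) {k : ℕ} (hk : k ∈ Icc 1 n) :
    Commute (XR K n i) (mkR K n (elemPoly K n k)) := by
  rw [mem_Icc] at hk
  rw [XR, commute_iff_eq, ← map_mul, ← map_mul]
  exact RingQuot.mkAlgHom_rel K ⟨i, k, hk.1, hk.2, rfl, rfl⟩

theorem commute_Xone_sum_Xone {p : ℕ} (hp : p ∈ Icc 1 n) :
    Commute (Xone K n p) (∑ q ∈ Icc 1 n, Xone K n q) := by
  rw [mem_Icc] at hp
  rw [← mkR_elemPoly_one, Xone, dif_pos (by omega)]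
  exact commute_XR_mkR_elemPoly _ (by grind)

end Rquot

/-- In `R′`, the sum of the diagonal commutators satisfies
`∑_{k=2}^{n} [x_k, x_{k−1}] = ∑_{p=1}^{n−2} ∑_{j=2}^{n−p} j·[x_p, x_{j+p}]`,
where the factor `j` is the integer `j`. -/
theorem sum_diagonal_commutators
    (K : Type*) [Field K] [CharZero K] (n : ℕ) (hn : 3 ≤ n) :
    ∑ k ∈ Finset.Icc 2 n, (Xone K n k * Xone K n (k - 1) - Xone K n (k - 1) * Xone K n k) =
      ∑ p ∈ Finset.Icc 1 (n - 2), ∑ j ∈ Finset.Icc 2 (n - p),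
        j • (Xone K n p * Xone K n (j + p) - Xone K n (j + p) * Xone K n p) := by
  let _ : LieRing (Rquot K n) := LieRing.ofAssociativeRing
  exact sum_diagonal_commutators_general (Xone K n) n fun _ hp ↦ (commute_Xone_sum_Xone hp).lie_eq
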